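/- Achievability of the secrecy rate (rate part of Theorem 1): for all σ_b, σ_e with 0 < σ_b < σ_e and every ε > 0, there exist α > 0 and an integer r ≥ 2 such that the total secrecy rate of the binary partition chain αℤ/2αℤ/⋯/2^{r−1}αℤ satisfies Σ_{i=1}^{r−1} ( C(2^{i−1}α, σ_b) − C(2^{i−1}α, σ_e) ) > (1/2)·log( σ_e² / σ_b² ) − ε; that is, by scaling the top lattice and increasing the number of levels, the secrecy rate can be made arbitrarily close to (1/2)·log(σ_e²/σ_b²). -/

import Mathlib

open MeasureTheory Real Filter

/-- The Gaussian density with zero mean and standard deviation `σ`. -/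
noncomputable def gaussDen (σ x : ℝ) : ℝ :=
  (Real.sqrt (2 * Real.pi * σ ^ 2))⁻¹ * Real.exp (-x ^ 2 / (2 * σ ^ 2))

/-- The `αℤ`-aliased Gaussian density `f_{σ,α}(x) = Σ_{k∈ℤ} g_σ(x − kα)`. -/
noncomputable def aliasedDen (σ α x : ℝ) : ℝ := ∑' k : ℤ, gaussDen σ (x - (k : ℝ) * α)

/-- The differential entropy `h(α,σ)` of the `αℤ`-aliased Gaussian noise
on the fundamental region `[0, α)`. -/
noncomputable def aliasedEnt (α σ : ℝ) : ℝ :=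
  -∫ x in Set.Ico (0 : ℝ) α, aliasedDen σ α x * Real.log (aliasedDen σ α x)

/-- The capacity `C(α,σ) = h(α,σ) − h(2α,σ) + log 2` of the binary partition channel
`αℤ/2αℤ` with Gaussian noise of variance `σ²`. -/
noncomputable def partCap (α σ : ℝ) : ℝ :=
  aliasedEnt α σ - aliasedEnt (2 * α) σ + Real.log 2

lemma gd_pos {σ : ℝ} (hσ : 0 < σ) (x : ℝ) : 0 < gaussDen σ x := by
  unfold gaussDen; positivity

lemma gd_cont (σ : ℝ) : Continuous (gaussDen σ) := by
  unfold gaussDen; fun_prop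

lemma gd_eq {σ : ℝ} (x : ℝ) :
    gaussDen σ x = ProbabilityTheory.gaussianPDFReal 0 ⟨σ ^ 2, sq_nonneg σ⟩ x := by
  simp only [gaussDen, ProbabilityTheory.gaussianPDFReal, sub_zero]; rfl

lemma gd_integrable (σ : ℝ) : Integrable (gaussDen σ) := by
  have := ProbabilityTheory.integrable_gaussianPDFReal 0 ⟨σ ^ 2, sq_nonneg σ⟩
  refine this.congr (ae_of_all _ fun x => (gd_eq x).symm)

lemma nn_ne {σ : ℝ} (hσ : 0 < σ) : (⟨σ ^ 2, sq_nonneg σ⟩ : NNReal) ≠ 0 := by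
  intro h
  have := congrArg NNReal.toReal h
  have h2 : σ ^ 2 = 0 := this
  have : 0 < σ ^ 2 := by positivity
  linarith

lemma gd_integral {σ : ℝ} (hσ : 0 < σ) : ∫ x, gaussDen σ x = 1 := by
  have := ProbabilityTheory.integral_gaussianPDFReal_eq_one 0 (nn_ne hσ)
  rw [← this]
  exact integral_congr_ae (ae_of_all _ fun x => gd_eq x)

lemma gd_integral_sq {σ : ℝ} (hσ : 0 < σ) : ∫ x, gaussDen σ x * x ^ 2 = σ ^ 2 := by
  obtain ⟨v, hv⟩ : ∃ v : NNReal, (v : ℝ) = σ ^ 2 := ⟨⟨σ ^ 2, sq_nonneg σ⟩, rfl⟩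
  have hv0 : v ≠ 0 := by
    rintro rfl
    have : 0 < σ ^ 2 := by positivity
    rw [← hv] at this; simp at this
  have h1 := ProbabilityTheory.variance_fun_id_gaussianReal (μ := 0) (v := v)
  rw [ProbabilityTheory.variance_eq_integral (by fun_prop)] at h1
  simp only [ProbabilityTheory.integral_id_gaussianReal, sub_zero] at h1
  rw [ProbabilityTheory.integral_gaussianReal_eq_integral_smul hv0, hv] at h1
  rw [← h1]
  refine integral_congr_ae (ae_of_all _ fun x => ?_)
  simp only [gaussDen, ProbabilityTheory.gaussianPDFReal, smul_eq_mul, hv, sub_zero]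

lemma gd_integrable_sq {σ : ℝ} (hσ : 0 < σ) : Integrable (fun x => gaussDen σ x * x ^ 2) := by
  by_contra h
  have h1 := gd_integral_sq hσ
  rw [integral_undef h] at h1
  have : 0 < σ ^ 2 := by positivity
  linarith

lemma summable_gauss_int {c : ℝ} (hc : 0 < c) : Summable (fun k : ℤ => rexp (-(c * (k : ℝ) ^ 2))) := by
  have h0 : Summable (fun n : ℕ => rexp (-(c * (n : ℝ) ^ 2))) := by
    have h1 := Real.summable_exp_nat_mul_of_ge (c := -c) (by linarith) (f := fun n => (n : ℝ) ^ 2)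
      (fun i => by
        have : (i : ℝ) ≤ ((i ^ 2 : ℕ) : ℝ) := by exact_mod_cast Nat.le_self_pow (by norm_num) i
        push_cast at this; exact this)
    refine h1.congr fun n => by congr 1; ring
  apply Summable.of_nat_of_neg <;> simpa using h0

lemma gd_bound {σ A₀ A x R : ℝ} (hσ : 0 < σ) (hA₀ : 0 < A₀) (hA : A₀ ≤ A) (hx : |x| ≤ R) (k : ℤ) :
    gaussDen σ (x - k * A) ≤ (Real.sqrt (2 * Real.pi * σ ^ 2))⁻¹ * rexp (R ^ 2 / (2 * σ ^ 2)) *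
      rexp (-(A₀ ^ 2 / (4 * σ ^ 2) * (k : ℝ) ^ 2)) := by
  unfold gaussDen
  rw [mul_assoc (Real.sqrt (2 * Real.pi * σ ^ 2))⁻¹, ← Real.exp_add]
  gcongr
  have h1 : x ^ 2 ≤ R ^ 2 := by rw [← sq_abs x]; gcongr
  have h2 : A₀ ^ 2 * (k : ℝ) ^ 2 ≤ A ^ 2 * (k : ℝ) ^ 2 := by gcongr
  have h3 : -(x - k * A) ^ 2 ≤ R ^ 2 - A₀ ^ 2 * k ^ 2 / 2 := by nlinarith [sq_nonneg (2 * x - k * A)]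
  calc -(x - k * A) ^ 2 / (2 * σ ^ 2) ≤ (R ^ 2 - A₀ ^ 2 * k ^ 2 / 2) / (2 * σ ^ 2) := by gcongr
    _ = _ := by field_simp; ring

lemma bound_summable {σ A₀ : ℝ} (hσ : 0 < σ) (hA₀ : 0 < A₀) (C : ℝ) :
    Summable (fun k : ℤ => C * rexp (-(A₀ ^ 2 / (4 * σ ^ 2) * (k : ℝ) ^ 2))) :=
  (summable_gauss_int (by positivity)).mul_left _

lemma gd_summable {σ A : ℝ} (hσ : 0 < σ) (hA : 0 < A) (x : ℝ) :
    Summable (fun k : ℤ => gaussDen σ (x - k * A)) :=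
  Summable.of_nonneg_of_le (fun k => (gd_pos hσ _).le)
    (fun k => gd_bound hσ hA le_rfl (le_refl |x|) k) (bound_summable hσ hA _)

lemma gd_le_al {σ A : ℝ} (hσ : 0 < σ) (hA : 0 < A) (x : ℝ) : gaussDen σ x ≤ aliasedDen σ A x := by
  have := (gd_summable hσ hA x).le_tsum 0 (fun k _ => (gd_pos hσ _).le)
  simpa [aliasedDen] using this

lemma al_pos {σ A : ℝ} (hσ : 0 < σ) (hA : 0 < A) (x : ℝ) : 0 < aliasedDen σ A x :=
  (gd_pos hσ x).trans_le (gd_le_al hσ hA x)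

lemma al_eq (σ A x : ℝ) : aliasedDen σ A x = ∑' k : ℤ, gaussDen σ (x + k * A) := by
  unfold aliasedDen
  rw [← (Equiv.neg ℤ).tsum_eq]
  simp

lemma al_periodic (σ A : ℝ) : Function.Periodic (aliasedDen σ A) A := by
  intro x
  rw [al_eq, al_eq, ← (Equiv.addRight (1 : ℤ)).tsum_eq (fun k : ℤ => gaussDen σ (x + k * A))]
  congr 1; ext k; congr 1; simp; ring

lemma al_bdd {σ A : ℝ} (hσ : 0 < σ) (hA : 0 < A) : ∃ M, ∀ x, aliasedDen σ A x ≤ M := by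
  refine ⟨∑' k : ℤ, ((Real.sqrt (2 * Real.pi * σ ^ 2))⁻¹ * rexp (A ^ 2 / (2 * σ ^ 2)) *
      rexp (-(A ^ 2 / (4 * σ ^ 2) * (k : ℝ) ^ 2))), fun x => ?_⟩
  obtain ⟨y, hy, hxy⟩ := (al_periodic σ A).exists_mem_Ico₀ hA x
  rw [hxy]
  refine (gd_summable hσ hA y).tsum_le_tsum (fun k => gd_bound hσ hA le_rfl ?_ k)
    (bound_summable hσ hA _)
  rw [abs_of_nonneg hy.1]; exact hy.2.le

lemma al_meas {σ A : ℝ} (hσ : 0 < σ) (hA : 0 < A) : Measurable (aliasedDen σ A) := by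
  refine measurable_of_tendsto_metrizable' (atTop : Filter (Finset ℤ))
    (f := fun (s : Finset ℤ) (x : ℝ) => ∑ k ∈ s, gaussDen σ (x - k * A)) ?_ ?_
  · intro s
    exact Finset.measurable_fun_sum _ fun k _ => ((gd_cont σ).comp (by fun_prop)).measurable
  · rw [tendsto_pi_nhds]
    intro x
    exact (gd_summable hσ hA x).hasSum

lemma integral_Ico_shift (F : ℝ → ℝ) (A : ℝ) (n : ℤ) :
    ∫ x in Set.Ico (n • A) ((n + 1) • A), F x = ∫ x in Set.Ico 0 A, F (x + n * A) := by
  have := (measurePreserving_add_right volume ((n : ℝ) * A)).setIntegral_preimage_emb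
    (measurableEmbedding_addRight _) F (Set.Ico (n • A) ((n + 1) • A))
  rw [← this]
  congr 2
  ext x
  simp only [Set.mem_preimage, Set.mem_Ico, zsmul_eq_mul]
  push_cast
  constructor <;> rintro ⟨h1, h2⟩ <;> constructor <;> linarith

lemma hasSum_fold {F : ℝ → ℝ} (hF : Integrable F) {A : ℝ} (hA : 0 < A) :
    HasSum (fun n : ℤ => ∫ x in Set.Ico 0 A, F (x + n * A)) (∫ x, F x) := by
  have := hasSum_integral_iUnion (μ := volume) (f := F)
    (s := fun n : ℤ => Set.Ico (n • A) ((n + 1) • A))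
    (fun _ => measurableSet_Ico) (by simpa using Set.pairwise_disjoint_Ico_add_zsmul (0 : ℝ) A)
    hF.integrableOn
  rw [iUnion_Ico_zsmul hA, setIntegral_univ] at this
  simpa only [integral_Ico_shift] using this

lemma unfold_int {σ A : ℝ} (hσ : 0 < σ) (hA : 0 < A) {φ : ℝ → ℝ} (hφ : Function.Periodic φ A)
    (hi : Integrable (fun x => gaussDen σ x * φ x)) :
    ∫ x in Set.Ico 0 A, aliasedDen σ A x * φ x = ∫ x, gaussDen σ x * φ x := by
  have hp : ∀ (n : ℤ) x, φ (x + n * A) = φ x := fun n x => hφ.int_mul n x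
  have h1 := hasSum_fold hi hA
  have h2 := (hasSum_fold hi.norm hA).summable
  have h3 := hasSum_integral_of_summable_integral_norm (μ := volume.restrict (Set.Ico 0 A))
    (F := fun (n : ℤ) x => gaussDen σ (x + n * A) * φ (x + n * A))
    (fun n => (hi.comp_add_right ((n : ℝ) * A)).integrableOn) h2
  rw [h1.unique h3]
  refine integral_congr_ae (ae_of_all _ fun x => ?_)
  simp only [hp, tsum_mul_right, al_eq]

lemma al_integral {σ A : ℝ} (hσ : 0 < σ) (hA : 0 < A) :
    ∫ x in Set.Ico 0 A, aliasedDen σ A x = 1 := by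
  have := unfold_int hσ hA (φ := fun _ => 1) (fun x => rfl) (by simpa using gd_integrable σ)
  simpa [gd_integral hσ] using this

lemma al_intervalIntegrable {σ A : ℝ} (hσ : 0 < σ) (hA : 0 < A) (a b : ℝ) :
    IntervalIntegrable (aliasedDen σ A) volume a b := by
  obtain ⟨M, hM⟩ := al_bdd hσ hA
  rw [intervalIntegrable_iff]
  refine Measure.integrableOn_of_bounded (M := M) (by simp) (al_meas hσ hA).aestronglyMeasurable ?_
  exact ae_of_all _ fun x => by rw [Real.norm_of_nonneg (al_pos hσ hA x).le]; exact hM x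

lemma al_integral' {σ A : ℝ} (hσ : 0 < σ) (hA : 0 < A) (t : ℝ) :
    ∫ x in t..(t + A), aliasedDen σ A x = 1 := by
  rw [(al_periodic σ A).intervalIntegral_add_eq t 0, zero_add,
    intervalIntegral.integral_of_le hA.le, ← integral_Ico_eq_integral_Ioc, al_integral hσ hA]

lemma gd_mid {σ : ℝ} (hσ : 0 < σ) (y t : ℝ) :
    2 * rexp (-t ^ 2 / (2 * σ ^ 2)) * gaussDen σ y ≤ gaussDen σ (y + t) + gaussDen σ (y - t) := by
  have h1 : gaussDen σ (y + t) =
      rexp (-t ^ 2 / (2 * σ ^ 2)) * gaussDen σ y * rexp (-(y * t / σ ^ 2)) := by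
    unfold gaussDen
    rw [mul_left_comm, mul_assoc, mul_assoc, ← Real.exp_add, ← Real.exp_add]
    congr 2; field_simp; ring
  have h2 : gaussDen σ (y - t) =
      rexp (-t ^ 2 / (2 * σ ^ 2)) * gaussDen σ y * rexp (y * t / σ ^ 2) := by
    unfold gaussDen
    rw [mul_left_comm, mul_assoc, mul_assoc, ← Real.exp_add, ← Real.exp_add]
    congr 2; field_simp; ring
  rw [h1, h2, ← mul_add]
  have h3 : 2 ≤ rexp (-(y * t / σ ^ 2)) + rexp (y * t / σ ^ 2) := by
    have := Real.one_le_cosh (y * t / σ ^ 2)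
    rw [Real.cosh_eq] at this; linarith
  have h4 : 0 ≤ rexp (-t ^ 2 / (2 * σ ^ 2)) * gaussDen σ y :=
    mul_nonneg (Real.exp_pos _).le (gd_pos hσ _).le
  nlinarith

lemma al_mid {σ A : ℝ} (hσ : 0 < σ) (hA : 0 < A) (x t : ℝ) :
    2 * rexp (-t ^ 2 / (2 * σ ^ 2)) * aliasedDen σ A x ≤
      aliasedDen σ A (x + t) + aliasedDen σ A (x - t) := by
  unfold aliasedDen
  rw [← tsum_mul_left, ← (gd_summable hσ hA (x + t)).tsum_add (gd_summable hσ hA (x - t))]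
  refine ((gd_summable hσ hA x).mul_left _).tsum_le_tsum (fun k => ?_)
    ((gd_summable hσ hA (x + t)).add (gd_summable hσ hA (x - t)))
  have := gd_mid hσ (x - k * A) t
  have e1 : x + t - k * A = x - k * A + t := by ring
  have e2 : x - t - k * A = x - k * A - t := by ring
  rw [e1, e2]; exact this

lemma al_sup {σ A : ℝ} (hσ : 0 < σ) (hA : 0 < A) (x : ℝ) :
    aliasedDen σ A x ≤ rexp (A ^ 2 / (2 * σ ^ 2)) / A := by
  have h1 : ∫ t in (0 : ℝ)..A, 2 * rexp (-A ^ 2 / (2 * σ ^ 2)) * aliasedDen σ A x ≤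
      ∫ t in (0 : ℝ)..A, (aliasedDen σ A (x + t) + aliasedDen σ A (x - t)) := by
    refine intervalIntegral.integral_mono_on hA.le (by simp) ?_ ?_
    · refine IntervalIntegrable.add ?_ ?_
      · simpa using (al_intervalIntegrable hσ hA (x + 0) (x + A)).comp_add_left x
      · simpa using (al_intervalIntegrable hσ hA (x - 0) (x - A)).comp_sub_left x
    · intro t ht
      refine le_trans ?_ (al_mid hσ hA x t)
      have := (al_pos hσ hA x).le
      have h0 := ht.1
      have h2 := ht.2
      gcongr
  rw [intervalIntegral.integral_add, intervalIntegral.integral_comp_add_left,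
    intervalIntegral.integral_comp_sub_left, intervalIntegral.integral_const] at h1
  · rw [add_zero, sub_zero, sub_zero, al_integral' hσ hA] at h1
    have h3 := al_integral' hσ hA (x - A)
    rw [sub_add_cancel] at h3
    rw [h3, smul_eq_mul] at h1
    have h4 : rexp (-A ^ 2 / (2 * σ ^ 2)) * rexp (A ^ 2 / (2 * σ ^ 2)) = 1 := by
      rw [← Real.exp_add, neg_div, neg_add_cancel, Real.exp_zero]
    rw [le_div_iff₀ hA]
    have h5 := Real.exp_pos (A ^ 2 / (2 * σ ^ 2))
    calc aliasedDen σ A x * A = (A * (rexp (-A ^ 2 / (2 * σ ^ 2)) * aliasedDen σ A x)) *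
          rexp (A ^ 2 / (2 * σ ^ 2)) := by linear_combination (-(aliasedDen σ A x * A)) * h4
      _ ≤ 1 * rexp (A ^ 2 / (2 * σ ^ 2)) := by gcongr; linarith
      _ = _ := one_mul _
  · simpa using (al_intervalIntegrable hσ hA (x + 0) (x + A)).comp_add_left x
  · simpa using (al_intervalIntegrable hσ hA (x - 0) (x - A)).comp_sub_left x

lemma log_gd {σ : ℝ} (hσ : 0 < σ) (x : ℝ) :
    Real.log (gaussDen σ x) = -((1 / 2) * Real.log (2 * Real.pi * σ ^ 2)) - x ^ 2 / (2 * σ ^ 2) := by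
  unfold gaussDen
  rw [Real.log_mul (by positivity) (Real.exp_pos _).ne', Real.log_exp, Real.log_inv,
    Real.log_sqrt (by positivity)]
  ring

lemma int_g_log_g {σ : ℝ} (hσ : 0 < σ) :
    -∫ x, gaussDen σ x * Real.log (gaussDen σ x) =
      (1 / 2) * Real.log (2 * Real.pi * σ ^ 2) + 1 / 2 := by
  have h : ∀ x, gaussDen σ x * Real.log (gaussDen σ x) =
      gaussDen σ x * (-((1 / 2) * Real.log (2 * Real.pi * σ ^ 2))) +
        gaussDen σ x * x ^ 2 * (-(1 / (2 * σ ^ 2))) := by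
    intro x; rw [log_gd hσ]; ring
  simp_rw [h]
  rw [integral_add ((gd_integrable σ).mul_const _) ((gd_integrable_sq hσ).mul_const _),
    integral_mul_const, integral_mul_const, gd_integral hσ, gd_integral_sq hσ]
  field_simp
  ring

lemma abs_log_le {σ M x y : ℝ} (hσ : 0 < σ) (h1 : gaussDen σ x ≤ y) (h2 : y ≤ M) :
    |Real.log y| ≤ |Real.log M| + |(1 / 2) * Real.log (2 * Real.pi * σ ^ 2)| +
      x ^ 2 * (1 / (2 * σ ^ 2)) := by
  have h3 := Real.log_le_log (gd_pos hσ x) h1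
  have h4 := Real.log_le_log ((gd_pos hσ x).trans_le h1) h2
  rw [log_gd hσ] at h3
  have h5 : 0 ≤ x ^ 2 / (2 * σ ^ 2) := by positivity
  have h6 : x ^ 2 * (1 / (2 * σ ^ 2)) = x ^ 2 / (2 * σ ^ 2) := by ring
  rw [h6, abs_le]
  have := le_abs_self (Real.log M)
  have := abs_nonneg (Real.log M)
  have := le_abs_self ((1 / 2) * Real.log (2 * Real.pi * σ ^ 2))
  have := abs_nonneg ((1 / 2) * Real.log (2 * Real.pi * σ ^ 2))
  constructor <;> linarith

lemma dom_integrable {σ : ℝ} (hσ : 0 < σ) (K : ℝ) :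
    Integrable (fun x => gaussDen σ x * (K + x ^ 2 * (1 / (2 * σ ^ 2)))) := by
  refine (((gd_integrable σ).mul_const K).add
    ((gd_integrable_sq hσ).mul_const (1 / (2 * σ ^ 2)))).congr (ae_of_all _ fun x => ?_)
  simp only [Pi.add_apply]; ring

lemma norm_le {σ M x y : ℝ} (hσ : 0 < σ) (h1 : gaussDen σ x ≤ y) (h2 : y ≤ M) :
    ‖gaussDen σ x * Real.log y‖ ≤ gaussDen σ x * (|Real.log M| +
      |(1 / 2) * Real.log (2 * Real.pi * σ ^ 2)| + x ^ 2 * (1 / (2 * σ ^ 2))) := by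
  rw [norm_mul, Real.norm_of_nonneg (gd_pos hσ x).le, Real.norm_eq_abs]
  have := gd_pos hσ x
  gcongr
  exact abs_log_le hσ h1 h2

lemma glog_meas {σ A : ℝ} (hσ : 0 < σ) (hA : 0 < A) :
    AEStronglyMeasurable (fun x => gaussDen σ x * Real.log (aliasedDen σ A x)) volume :=
  ((gd_cont σ).measurable.mul (Real.measurable_log.comp (al_meas hσ hA))).aestronglyMeasurable

lemma glog_integrable {σ A : ℝ} (hσ : 0 < σ) (hA : 0 < A) :
    Integrable (fun x => gaussDen σ x * Real.log (aliasedDen σ A x)) := by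
  obtain ⟨M, hM⟩ := al_bdd hσ hA
  exact (dom_integrable hσ _).mono' (glog_meas hσ hA)
    (ae_of_all _ fun x => norm_le hσ (gd_le_al hσ hA x) (hM x))

lemma glogg_integrable {σ : ℝ} (hσ : 0 < σ) :
    Integrable (fun x => gaussDen σ x * Real.log (gaussDen σ x)) := by
  obtain ⟨M, hM⟩ := al_bdd hσ one_pos
  refine (dom_integrable hσ _).mono' ((gd_cont σ).measurable.mul
      (Real.measurable_log.comp (gd_cont σ).measurable)).aestronglyMeasurable
    (ae_of_all _ fun x => norm_le hσ le_rfl ((gd_le_al hσ one_pos x).trans (hM x)))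

lemma ent_eq {σ A : ℝ} (hσ : 0 < σ) (hA : 0 < A) :
    aliasedEnt A σ = -∫ x, gaussDen σ x * Real.log (aliasedDen σ A x) := by
  unfold aliasedEnt
  rw [unfold_int hσ hA (φ := fun x => Real.log (aliasedDen σ A x))
    (fun x => by simp only [al_periodic σ A x]) (glog_integrable hσ hA)]

lemma ent_le {σ A : ℝ} (hσ : 0 < σ) (hA : 0 < A) :
    aliasedEnt A σ ≤ (1 / 2) * Real.log (2 * Real.pi * σ ^ 2) + 1 / 2 := by
  rw [ent_eq hσ hA, ← int_g_log_g hσ]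
  refine neg_le_neg (integral_mono (glogg_integrable hσ) (glog_integrable hσ hA) fun x => ?_)
  exact mul_le_mul_of_nonneg_left (Real.log_le_log (gd_pos hσ x) (gd_le_al hσ hA x))
    (gd_pos hσ x).le

lemma ent_ge_small {σ A : ℝ} (hσ : 0 < σ) (hA : 0 < A) :
    Real.log A - A ^ 2 / (2 * σ ^ 2) ≤ aliasedEnt A σ := by
  rw [ent_eq hσ hA]
  have h : ∫ x, gaussDen σ x * Real.log (aliasedDen σ A x) ≤
      ∫ x, gaussDen σ x * (A ^ 2 / (2 * σ ^ 2) - Real.log A) := by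
    refine integral_mono (glog_integrable hσ hA) ((gd_integrable σ).mul_const _) fun x => ?_
    refine mul_le_mul_of_nonneg_left ?_ (gd_pos hσ x).le
    have := Real.log_le_log (al_pos hσ hA x) (al_sup hσ hA x)
    rwa [Real.log_div (Real.exp_pos _).ne' hA.ne', Real.log_exp] at this
  rw [integral_mul_const, gd_integral hσ] at h
  linarith

lemma ent_le_small {σ A : ℝ} (hσ : 0 < σ) (hA : 0 < A) :
    aliasedEnt A σ ≤ Real.log A := by
  unfold aliasedEnt
  obtain ⟨M, hM⟩ := al_bdd hσ hA
  obtain ⟨C, hC⟩ := (isCompact_Icc (a := (0 : ℝ)) (b := M)).exists_bound_of_continuousOn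
    Real.continuous_mul_log.continuousOn
  have hi : IntegrableOn (fun x => aliasedDen σ A x * Real.log (aliasedDen σ A x))
      (Set.Ico 0 A) volume := by
    refine Measure.integrableOn_of_bounded (M := C) (by simp) ((al_meas hσ hA).mul
      (Real.measurable_log.comp (al_meas hσ hA))).aestronglyMeasurable
      (ae_of_all _ fun x => hC _ ⟨(al_pos hσ hA x).le, hM x⟩)
  have hf : IntegrableOn (aliasedDen σ A) (Set.Ico 0 A) volume := by
    refine Measure.integrableOn_of_bounded (M := M) (by simp)
      (al_meas hσ hA).aestronglyMeasurable ?_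
    exact ae_of_all _ fun x => by rw [Real.norm_of_nonneg (al_pos hσ hA x).le]; exact hM x
  have h : ∫ x in Set.Ico 0 A, (aliasedDen σ A x * (1 - Real.log A) - A⁻¹) ≤
      ∫ x in Set.Ico 0 A, aliasedDen σ A x * Real.log (aliasedDen σ A x) := by
    refine integral_mono ((hf.mul_const _).sub (by simp)) hi fun x => ?_
    have hp := al_pos hσ hA x
    have h1 := Real.one_sub_inv_le_log_of_pos (mul_pos hA hp)
    rw [Real.log_mul hA.ne' hp.ne'] at h1
    have h2 := mul_le_mul_of_nonneg_left h1 hp.le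
    have h3 : aliasedDen σ A x * (A * aliasedDen σ A x)⁻¹ = A⁻¹ := by field_simp
    simp only
    rw [mul_sub, h3] at h2
    linarith
  rw [integral_sub (hf.mul_const _) (by simp), integral_mul_const, al_integral hσ hA] at h
  simp [hA.le, hA.ne'] at h
  linarith

lemma al_le_of_mul {σ A : ℝ} (hσ : 0 < σ) (hA : 0 < A) (n : ℕ) (x : ℝ) :
    aliasedDen σ (2 ^ n * A) x ≤ aliasedDen σ A x := by
  have := tsum_comp_le_tsum_of_inj (gd_summable hσ hA x) (fun k => (gd_pos hσ _).le)
    (i := fun k : ℤ => k * 2 ^ n) (mul_left_injective₀ (by positivity))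
  refine le_trans (le_of_eq ?_) this
  unfold aliasedDen
  congr 1; ext k
  simp only [Function.comp]
  push_cast
  rw [mul_assoc]

lemma gd_tendsto {σ : ℝ} (hσ : 0 < σ) : Tendsto (gaussDen σ) (cocompact ℝ) (nhds 0) := by
  have h : Tendsto (fun x : ℝ => x ^ 2 / (2 * σ ^ 2)) (cocompact ℝ) atTop := by
    refine Tendsto.atTop_div_const (by positivity) ?_
    have := (tendsto_pow_atTop (α := ℝ) (two_ne_zero)).comp (tendsto_norm_cocompact_atTop (E := ℝ))
    refine this.congr fun x => by simp
  have h2 := (Real.tendsto_exp_neg_atTop_nhds_zero.comp h).const_mul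
    (Real.sqrt (2 * Real.pi * σ ^ 2))⁻¹
  rw [mul_zero] at h2
  refine h2.congr fun x => ?_
  simp only [Function.comp, gaussDen, neg_div]

lemma al_tendsto {σ A : ℝ} (hσ : 0 < σ) (hA : 0 < A) (x : ℝ) :
    Tendsto (fun n : ℕ => aliasedDen σ (2 ^ n * A) x) atTop (nhds (gaussDen σ x)) := by
  have h := tendsto_tsum_of_dominated_convergence (𝓕 := atTop)
    (f := fun (n : ℕ) (k : ℤ) => gaussDen σ (x - k * (2 ^ n * A)))
    (g := fun k => if k = 0 then gaussDen σ x else 0)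
    (bound_summable hσ hA ((Real.sqrt (2 * Real.pi * σ ^ 2))⁻¹ * rexp (|x| ^ 2 / (2 * σ ^ 2))))
    ?_ ?_
  · rw [tsum_ite_eq] at h
    exact h
  · intro k
    by_cases hk : k = 0
    · simp [hk]
    · simp only [hk, if_false]
      refine (gd_tendsto hσ).comp ?_
      rw [← Metric.cobounded_eq_cocompact, ← tendsto_norm_atTop_iff_cobounded]
      have h2 : Tendsto (fun n : ℕ => (2 : ℝ) ^ n * (|(k : ℝ)| * A) - |x|) atTop atTop := by
        refine tendsto_atTop_add_const_right _ _ (Tendsto.atTop_mul_const ?_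
          (tendsto_pow_atTop_atTop_of_one_lt (by norm_num)))
        have : (k : ℝ) ≠ 0 := by exact_mod_cast hk
        positivity
      refine tendsto_atTop_mono (fun n => ?_) h2
      have h3 := abs_sub_abs_le_abs_sub ((k : ℝ) * (2 ^ n * A)) x
      rw [abs_sub_comm, abs_mul, abs_of_pos (show (0 : ℝ) < 2 ^ n * A by positivity)] at h3
      rw [Real.norm_eq_abs]
      linarith
  · refine Eventually.of_forall fun n k => ?_
    rw [Real.norm_of_nonneg (gd_pos hσ _).le]
    refine gd_bound hσ hA ?_ le_rfl k
    exact le_mul_of_one_le_left hA.le (one_le_pow₀ (by norm_num))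

lemma ent_tendsto {σ A : ℝ} (hσ : 0 < σ) (hA : 0 < A) :
    Tendsto (fun n : ℕ => aliasedEnt (2 ^ n * A) σ) atTop
      (nhds ((1 / 2) * Real.log (2 * Real.pi * σ ^ 2) + 1 / 2)) := by
  obtain ⟨M, hM⟩ := al_bdd hσ hA
  have hp : ∀ n : ℕ, (0 : ℝ) < 2 ^ n * A := fun n => by positivity
  rw [← int_g_log_g hσ]
  simp_rw [fun n => ent_eq hσ (hp n)]
  refine Tendsto.neg ?_
  refine tendsto_integral_of_dominated_convergence _ (fun n => glog_meas hσ (hp n))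
    (dom_integrable hσ _) (fun n => ae_of_all _ fun x => norm_le hσ (gd_le_al hσ (hp n) x)
      ((al_le_of_mul hσ hA n x).trans (hM x))) (ae_of_all _ fun x => ?_)
  exact ((al_tendsto hσ hA x).log (gd_pos hσ x).ne').const_mul _

lemma sum_tel (α σ₁ σ₂ : ℝ) (n : ℕ) :
    ∑ i ∈ Finset.range n, (partCap ((2 : ℝ) ^ i * α) σ₁ - partCap ((2 : ℝ) ^ i * α) σ₂) =
      (aliasedEnt α σ₁ - aliasedEnt (2 ^ n * α) σ₁) -
        (aliasedEnt α σ₂ - aliasedEnt (2 ^ n * α) σ₂) := by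
  induction n with
  | zero => simp
  | succ n ih =>
    rw [Finset.sum_range_succ, ih]
    have : (2 : ℝ) ^ (n + 1) * α = 2 * (2 ^ n * α) := by ring
    rw [this]
    unfold partCap
    ring

/-- achievability of the secrecy rate (rate part of Theorem 1): by scaling
the top lattice and increasing the number of levels, the total secrecy rate of the chain
`αℤ/2αℤ/⋯/2^{r−1}αℤ` can be made arbitrarily close to `(1/2)·log(σ_e²/σ_b²)`. -/
theorem secrecy_rate_achievability (σb σe : ℝ) (hσb : 0 < σb) (hbe : σb < σe)
    (ε : ℝ) (hε : 0 < ε) :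
    ∃ α > (0 : ℝ), ∃ r : ℕ, 2 ≤ r ∧
      ∑ i ∈ Finset.range (r - 1),
          (partCap ((2 : ℝ) ^ i * α) σb - partCap ((2 : ℝ) ^ i * α) σe) >
        (1 / 2 : ℝ) * Real.log (σe ^ 2 / σb ^ 2) - ε := by
  have hσe : 0 < σe := hσb.trans hbe
  have hα : 0 < σb * Real.sqrt ε := by positivity
  refine ⟨σb * Real.sqrt ε, hα, ?_⟩
  have h1 := ent_ge_small hσb hα
  have h2 := ent_le_small hσe hα
  have h3 : (σb * Real.sqrt ε) ^ 2 / (2 * σb ^ 2) = ε / 2 := by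
    rw [mul_pow, Real.sq_sqrt hε.le]; field_simp
  have h4 := (ent_tendsto hσe hα).eventually_const_lt
    (show (1 / 2) * Real.log (2 * Real.pi * σe ^ 2) + 1 / 2 - ε / 2 <
      (1 / 2) * Real.log (2 * Real.pi * σe ^ 2) + 1 / 2 by linarith)
  obtain ⟨n, hn, hn1⟩ := (h4.and (eventually_ge_atTop 1)).exists
  have h5 := ent_le hσb (show (0 : ℝ) < 2 ^ n * (σb * Real.sqrt ε) by positivity)
  refine ⟨n + 1, by omega, ?_⟩
  rw [Nat.add_sub_cancel, sum_tel, Real.log_div (by positivity) (by positivity)]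
  rw [Real.log_mul (by positivity) (by positivity)] at hn h5
  linarith
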